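/- Let n ≥ 2 be an integer with n ≠ 3, and let d ≥ 0 be an integer. If {a·c^d, m·c^d} is linearly independent over ℚ in OS_n and dim_ℚ (OS_n^{S_n})_{2d+2} ≥ 2, then {a·m·c^d, c^{d+1}} is linearly independent over ℚ in OS_n. -/

import Mathlib

noncomputable section

/-- Unordered pairs of distinct elements of `{1, …, n+1}` (as `Fin (n+1)`). -/
abbrev OSidx (n : ℕ) := {s : Sym2 (Fin (n+1)) // ¬ s.IsDiag}

/-- The exterior algebra over `ℚ` on generators indexed by unordered pairs of distinct
elements of `{1, …, n+1}`. -/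
abbrev OSamb (n : ℕ) := ExteriorAlgebra ℚ (OSidx n →₀ ℚ)

/-- The generator `e_{ij} = e_{ji}` of the ambient exterior algebra. -/
def eAmb (n : ℕ) (i j : Fin (n+1)) (h : i ≠ j) : OSamb n :=
  ExteriorAlgebra.ι ℚ (Finsupp.single ⟨s(i,j), by simp [Sym2.mk_isDiag_iff, h]⟩ 1)

/-- The Orlik–Solomon relations for the braid arrangement. -/
inductive OSRel (n : ℕ) : OSamb n → OSamb n → Prop
  | rel (i j k : Fin (n+1)) (hij : i ≠ j) (hjk : j ≠ k) (hik : i ≠ k) :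
      OSRel n (eAmb n i k hik * eAmb n j k hjk - eAmb n i j hij * eAmb n j k hjk
        + eAmb n i j hij * eAmb n i k hik) 0

/-- The Orlik–Solomon algebra `OS_n` of the braid arrangement `A_n`. -/
abbrev OS (n : ℕ) := RingQuot (OSRel n)

/-- The generator `e_{ij}` of `OS_n`, defined to be `0` when `i = j`. -/
def eOS (n : ℕ) (i j : Fin (n+1)) : OS n :=
  if h : i = j then 0 else RingQuot.mkAlgHom ℚ (OSRel n) (eAmb n i j h)

/-- `a = Σ_{1 ≤ i < j ≤ n} e_{ij}`. -/
def aOS (n : ℕ) : OS n :=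
  ∑ p ∈ Finset.univ.filter (fun p : Fin n × Fin n => p.1 < p.2),
    eOS n p.1.castSucc p.2.castSucc

/-- `m = Σ_{1 ≤ i ≤ n} e_{i,n+1}`. -/
def mOS (n : ℕ) : OS n := ∑ i : Fin n, eOS n i.castSucc (Fin.last n)

/-- `c = Σ_{1 ≤ i < j ≤ n} (e_{ij} e_{i,n+1} + e_{ij} e_{j,n+1})`. -/
def cOS (n : ℕ) : OS n :=
  ∑ p ∈ Finset.univ.filter (fun p : Fin n × Fin n => p.1 < p.2),
    (eOS n p.1.castSucc p.2.castSucc * eOS n p.1.castSucc (Fin.last n)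
      + eOS n p.1.castSucc p.2.castSucc * eOS n p.2.castSucc (Fin.last n))

/-- `g = a·m − p·c` with `p = ⌊(n+1)/2⌋`. -/
def gOS (n : ℕ) : OS n := aOS n * mOS n - ((n+1)/2 : ℕ) • cOS n

/-- The action of a permutation on the index set of unordered pairs. -/
def OSpermIdx (n : ℕ) (σ : Equiv.Perm (Fin (n+1))) : OSidx n → OSidx n :=
  fun s => ⟨Sym2.map σ s.1, by
    obtain ⟨⟨x, y⟩, hs⟩ := s
    intro hd
    rw [Sym2.map_pair_eq, Sym2.mk_isDiag_iff] at hd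
    exact hs (Sym2.mk_isDiag_iff.mpr (σ.injective hd))⟩

/-- The algebra endomorphism of the ambient exterior algebra induced by a permutation. -/
def OSpermAmb (n : ℕ) (σ : Equiv.Perm (Fin (n+1))) : OSamb n →ₐ[ℚ] OSamb n :=
  ExteriorAlgebra.lift ℚ
    ⟨(ExteriorAlgebra.ι ℚ).comp (Finsupp.lmapDomain ℚ ℚ (OSpermIdx n σ)),
      fun m => by simp [ExteriorAlgebra.ι_sq_zero]⟩

lemma OSpermAmb_e (n : ℕ) (σ : Equiv.Perm (Fin (n+1))) (i j : Fin (n+1)) (h : i ≠ j) :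
    OSpermAmb n σ (eAmb n i j h) = eAmb n (σ i) (σ j) (fun hh => h (σ.injective hh)) := by
  simp only [OSpermAmb, eAmb, ExteriorAlgebra.lift_ι_apply, LinearMap.comp_apply,
    Finsupp.lmapDomain_apply, Finsupp.mapDomain_single]
  congr 1

/-- The algebra endomorphism of `OS_n` induced by a permutation of `{1, …, n+1}`. -/
def OSperm (n : ℕ) (σ : Equiv.Perm (Fin (n+1))) : OS n →ₐ[ℚ] OS n :=
  RingQuot.liftAlgHom ℚ
    ⟨(RingQuot.mkAlgHom ℚ (OSRel n)).comp (OSpermAmb n σ), by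
      intro x y h
      cases h with
      | rel i j k hij hjk hik =>
        simp only [AlgHom.comp_apply, map_sub, map_add, map_mul, map_zero, OSpermAmb_e]
        have := RingQuot.mkAlgHom_rel ℚ (OSRel.rel (σ i) (σ j) (σ k)
          (fun hh => hij (σ.injective hh)) (fun hh => hjk (σ.injective hh))
          (fun hh => hik (σ.injective hh)))
        simpa [map_sub, map_add, map_mul] using this⟩

/-- The subalgebra of `S_n`-invariants of `OS_n`, where `S_n` is the subgroup of permutations
of `{1, …, n+1}` fixing `n+1`. -/
def OSinv (n : ℕ) : Subalgebra ℚ (OS n) where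
  carrier := {x | ∀ σ : Equiv.Perm (Fin (n+1)), σ (Fin.last n) = Fin.last n → OSperm n σ x = x}
  mul_mem' := fun hx hy σ hσ => by rw [map_mul, hx σ hσ, hy σ hσ]
  add_mem' := fun hx hy σ hσ => by rw [map_add, hx σ hσ, hy σ hσ]
  one_mem' := fun σ _ => map_one _
  zero_mem' := fun σ _ => map_zero _
  algebraMap_mem' := fun r σ hσ => AlgHom.commutes _ r

/-- The subalgebra of `S_{n+1}`-invariants of `OS_n`. -/
def OSinvFull (n : ℕ) : Subalgebra ℚ (OS n) where
  carrier := {x | ∀ σ : Equiv.Perm (Fin (n+1)), OSperm n σ x = x}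
  mul_mem' := fun hx hy σ => by rw [map_mul, hx σ, hy σ]
  add_mem' := fun hx hy σ => by rw [map_add, hx σ, hy σ]
  one_mem' := fun σ => map_one _
  zero_mem' := fun σ => map_zero _
  algebraMap_mem' := fun r σ => AlgHom.commutes _ r

/-- The degree-`d` graded piece of `OS_n`: the image in `OS_n` of the degree-`d` component of
the exterior algebra. -/
def OSdeg (n : ℕ) (d : ℕ) : Submodule ℚ (OS n) :=
  Submodule.map (RingQuot.mkAlgHom ℚ (OSRel n)).toLinearMap
    ((LinearMap.range (ExteriorAlgebra.ι ℚ : (OSidx n →₀ ℚ) →ₗ[ℚ] OSamb n)) ^ d)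

/-- The degree-`d` graded piece of the invariant subalgebra `OS_n^{S_n}`. -/
def OSinvDeg (n : ℕ) (d : ℕ) : Submodule ℚ (OS n) :=
  Subalgebra.toSubmodule (OSinv n) ⊓ OSdeg n d

section Aux

variable {n : ℕ}

lemma eOS_self (i : Fin (n+1)) : eOS n i i = 0 := by simp [eOS]

lemma eOS_symm (i j : Fin (n+1)) : eOS n i j = eOS n j i := by
  unfold eOS
  by_cases h : i = j
  · simp [h]
  · have h' : ¬ j = i := fun hh => h hh.symm
    simp only [h, h', dite_false]
    congr 1
    unfold eAmb
    congr 2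
    exact Subtype.ext Sym2.eq_swap

lemma eOS_anti (i j k l : Fin (n+1)) : eOS n i j * eOS n k l = - (eOS n k l * eOS n i j) := by
  unfold eOS
  by_cases h : i = j
  · simp [h]
  by_cases h' : k = l
  · simp [h']
  simp only [h, h', dite_false, ← map_mul, ← map_neg]
  congr 1
  unfold eAmb
  exact eq_neg_of_add_eq_zero_left (ExteriorAlgebra.ι_add_mul_swap _ _)

lemma eOS_sq (i j : Fin (n+1)) : eOS n i j * eOS n i j = 0 := by
  have h := eOS_anti i j i j
  have h2 : (2 : ℚ) • (eOS n i j * eOS n i j) = 0 := by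
    rw [two_smul]; nth_rewrite 1 [h]; simp
  exact (smul_eq_zero.mp h2).resolve_left (by norm_num)

lemma eOS_rel (i j k : Fin (n+1)) :
    eOS n i k * eOS n j k = eOS n i j * eOS n j k - eOS n i j * eOS n i k := by
  by_cases hij : i = j
  · subst hij; simp [eOS_self, eOS_sq]
  by_cases hjk : j = k
  · subst hjk; simp [eOS_self, eOS_sq]
  by_cases hik : i = k
  · subst hik; rw [eOS_symm j i]; simp [eOS_self, eOS_sq]
  have := RingQuot.mkAlgHom_rel ℚ (OSRel.rel i j k hij hjk hik)
  simp only [map_add, map_sub, map_mul, map_zero] at this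
  simp only [eOS, hij, hjk, hik, dite_false]
  rw [← sub_eq_zero, ← this]
  abel

lemma exists_lift {B : Type*} [Ring B] [Algebra ℚ B] (f : Fin (n+1) → Fin (n+1) → B)
    (hself : ∀ i, f i i = 0) (hsymm : ∀ i j, f i j = f j i)
    (hanti : ∀ i j k l, f i j * f k l = - (f k l * f i j))
    (hrel : ∀ i j k, f i k * f j k = f i j * f j k - f i j * f i k) :
    ∃ φ : OS n →ₐ[ℚ] B, ∀ i j, φ (eOS n i j) = f i j := by
  let g : OSidx n → B := fun s => Sym2.lift ⟨f, hsymm⟩ s.1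
  have hg : ∀ s t, g s * g t = - (g t * g s) := by
    rintro ⟨⟨i, j⟩, hs⟩ ⟨⟨k, l⟩, ht⟩
    exact hanti i j k l
  let L : (OSidx n →₀ ℚ) →ₗ[ℚ] B := Finsupp.linearCombination ℚ g
  have hL : ∀ v w, L v * L w = - (L w * L v) := by
    intro v w
    induction v using Finsupp.induction_linear with
    | zero => simp
    | add v v' h h' => simp only [map_add, add_mul, mul_add, h, h', neg_add]
    | single s x =>
      induction w using Finsupp.induction_linear with
      | zero => simp
      | add v v' h h' => simp only [map_add, add_mul, mul_add, h, h', neg_add]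
      | single t y =>
        simp only [L, Finsupp.linearCombination_single, smul_mul_smul_comm]
        rw [hg s t, smul_neg, mul_comm]
  have hL2 : ∀ v, L v * L v = 0 := by
    intro v
    have h := hL v v
    have h2 : (2 : ℚ) • (L v * L v) = 0 := by
      rw [two_smul]; nth_rewrite 1 [h]; simp
    exact (smul_eq_zero.mp h2).resolve_left (by norm_num)
  let ψ : OSamb n →ₐ[ℚ] B := ExteriorAlgebra.lift ℚ ⟨L, hL2⟩
  have hψ : ∀ i j h, ψ (eAmb n i j h) = f i j := by
    intro i j h
    simp [ψ, eAmb, L, g, ExteriorAlgebra.lift_ι_apply]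
  let φ : OS n →ₐ[ℚ] B := RingQuot.liftAlgHom ℚ ⟨ψ, by
    intro x y h
    cases h with
    | rel i j k hij hjk hik =>
      simp only [map_add, map_sub, map_mul, map_zero, hψ]
      rw [hrel i j k]; abel⟩
  refine ⟨φ, fun i j => ?_⟩
  by_cases h : i = j
  · subst h; simp [eOS_self, hself]
  · simp only [eOS, h, dite_false]
    simp only [φ, RingQuot.liftAlgHom_mkAlgHom_apply, hψ]

/-- Localization at a flat, given by a block function. -/
lemma exists_loc (b : Fin (n+1) → ℕ) :
    ∃ φ : OS n →ₐ[ℚ] OS n, ∀ i j, φ (eOS n i j) = if b i = b j then eOS n i j else 0 := by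
  apply exists_lift
  · intro i; simp [eOS_self]
  · intro i j; rw [eOS_symm i j]; simp only [eq_comm]
  · intro i j k l
    split_ifs
    · exact eOS_anti i j k l
    all_goals simp
  · intro i j k
    by_cases h1 : b i = b j
    · by_cases h2 : b j = b k
      · simp [h1, h2, eOS_rel i j k]
      · simp [h1, h2]
    · by_cases h2 : b j = b k
      · have h3 : ¬ b i = b k := by omega
        simp [h1, h2, h3]
      · simp [h1, h2]

lemma exists_der :
    ∃ φ : OS n →ₐ[ℚ] Matrix (Fin 2) (Fin 2) (OS n),
      ∀ i j, i ≠ j → φ (eOS n i j) = !![eOS n i j, 1; 0, - eOS n i j] := by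
  obtain ⟨φ, hφ⟩ := exists_lift (n := n) (B := Matrix (Fin 2) (Fin 2) (OS n))
    (fun i j => if i = j then 0 else !![eOS n i j, 1; 0, - eOS n i j]) (by simp)
    (by intro i j; simp only [eOS_symm i j, eq_comm])
    (by
      intro i j k l
      split_ifs
      · simp
      · simp
      · simp
      · simp only [Matrix.mul_fin_two]
        rw [eOS_anti i j k l]
        ext a b; fin_cases a <;> fin_cases b <;> simp <;> first | exact eOS_anti i j k l | abel)
    (by
      intro i j k
      by_cases hij : i = j
      · subst hij; ext a b; fin_cases a <;> fin_cases b <;> by_cases h : i = k <;> simp [eOS_sq, h]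
      by_cases hjk : j = k
      · subst hjk; ext a b; fin_cases a <;> fin_cases b <;> simp [hij, eOS_sq]
      by_cases hik : i = k
      · subst hik; ext a b; fin_cases a <;> fin_cases b <;> simp [hij, hjk, eOS_symm j i, eOS_sq]
      ext a b; fin_cases a <;> fin_cases b <;> simp [hij, hjk, hik, eOS_rel i j k] <;> abel)
  exact ⟨φ, fun i j h => by simp [hφ, h]⟩

end Aux
section Deg

variable {n : ℕ}

/-- Span of generators within a vertex set. -/
def VS (n : ℕ) (T : Finset (Fin (n+1))) : Submodule ℚ (OS n) :=
  Submodule.span ℚ {x | ∃ a ∈ T, ∃ b ∈ T, x = eOS n a b}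

/-- Span of generators joining `x` to a vertex set. -/
def VX (n : ℕ) (T : Finset (Fin (n+1))) (x : Fin (n+1)) : Submodule ℚ (OS n) :=
  Submodule.span ℚ {y | ∃ a ∈ T, y = eOS n a x}

lemma eOS_mem_VS {T : Finset (Fin (n+1))} {a b : Fin (n+1)} (ha : a ∈ T) (hb : b ∈ T) :
    eOS n a b ∈ VS n T := Submodule.subset_span ⟨a, ha, b, hb, rfl⟩

lemma eOS_mem_VX {T : Finset (Fin (n+1))} {a : Fin (n+1)} (x : Fin (n+1)) (ha : a ∈ T) :
    eOS n a x ∈ VX n T x := Submodule.subset_span ⟨a, ha, rfl⟩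

lemma VS_insert (T : Finset (Fin (n+1))) (x : Fin (n+1)) :
    VS n (insert x T) ≤ VS n T ⊔ VX n T x := by
  apply Submodule.span_le.mpr
  rintro _ ⟨a, ha, b, hb, rfl⟩
  rw [SetLike.mem_coe]
  rw [Finset.mem_insert] at ha hb
  rcases ha with rfl | ha
  · rcases hb with rfl | hb
    · rw [eOS_self]; exact zero_mem _
    · rw [eOS_symm]; exact Submodule.mem_sup_right (eOS_mem_VX _ hb)
  · rcases hb with rfl | hb
    · exact Submodule.mem_sup_right (eOS_mem_VX _ ha)
    · exact Submodule.mem_sup_left (eOS_mem_VS ha hb)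

lemma VX_mul_VS (T : Finset (Fin (n+1))) (x : Fin (n+1)) :
    VX n T x * VS n T ≤ VS n T * VX n T x := by
  conv_lhs => rw [VX, VS, Submodule.span_mul_span]
  apply Submodule.span_le.mpr
  rintro _ ⟨_, ⟨a, ha, rfl⟩, _, ⟨b, hb, c, hc, rfl⟩, rfl⟩
  simp only [SetLike.mem_coe]
  rw [eOS_anti]
  exact neg_mem (Submodule.mul_mem_mul (eOS_mem_VS hb hc) (eOS_mem_VX x ha))

lemma VX_mul_VX (T : Finset (Fin (n+1))) (x : Fin (n+1)) :
    VX n T x * VX n T x ≤ VS n T * VX n T x := by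
  conv_lhs => rw [VX, Submodule.span_mul_span]
  apply Submodule.span_le.mpr
  rintro _ ⟨_, ⟨a, ha, rfl⟩, _, ⟨b, hb, rfl⟩, rfl⟩
  simp only [SetLike.mem_coe]
  rw [eOS_rel]
  exact sub_mem (Submodule.mul_mem_mul (eOS_mem_VS ha hb) (eOS_mem_VX x hb))
    (Submodule.mul_mem_mul (eOS_mem_VS ha hb) (eOS_mem_VX x ha))

lemma VS_insert_pow (T : Finset (Fin (n+1))) (x : Fin (n+1)) (k : ℕ) :
    VS n (insert x T) ^ (k+1) ≤ VS n T ^ (k+1) ⊔ VS n T ^ k * VX n T x := by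
  induction k with
  | zero => simpa using VS_insert T x
  | succ k ih =>
    rw [pow_succ]
    refine (mul_le_mul' ih (VS_insert T x)).trans ?_
    rw [Submodule.sup_mul, Submodule.mul_sup, Submodule.mul_sup, ← pow_succ]
    refine sup_le (sup_le le_sup_left le_sup_right) (sup_le ?_ ?_)
    · refine le_trans ?_ le_sup_right
      rw [mul_assoc, pow_succ (VS n T) k, mul_assoc]
      exact mul_le_mul' le_rfl (VX_mul_VS T x)
    · refine le_trans ?_ le_sup_right
      rw [mul_assoc, pow_succ (VS n T) k, mul_assoc]
      exact mul_le_mul' le_rfl (VX_mul_VX T x)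

lemma VS_pow_eq_bot (r : Fin (n+1)) (T : Finset (Fin (n+1))) (hr : r ∉ T) (k : ℕ)
    (hk : T.card < k) : VS n (insert r T) ^ k = ⊥ := by
  induction T using Finset.induction_on generalizing k with
  | empty =>
    have : VS n (insert r ∅) = ⊥ := by
      rw [eq_bot_iff]
      apply Submodule.span_le.mpr
      rintro _ ⟨a, ha, b, hb, rfl⟩
      simp at ha hb
      subst ha; subst hb
      simp [eOS_self]
    obtain ⟨k, rfl⟩ : ∃ k', k = k' + 1 := ⟨k - 1, by simp at hk; omega⟩
    rw [this, pow_succ, Submodule.mul_bot]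
  | insert x T hx ih =>
    rw [Finset.card_insert_of_notMem hx] at hk
    have hr' : r ∉ T := fun h => hr (Finset.mem_insert_of_mem h)
    obtain ⟨k, rfl⟩ : ∃ k', k = k' + 1 := ⟨k - 1, by omega⟩
    rw [Finset.insert_comm, eq_bot_iff]
    refine (VS_insert_pow _ x k).trans ?_
    rw [ih hr' (k+1) (by omega), ih hr' k (by omega)]
    simp

/-- Path monomials. -/
def pathM (n : ℕ) : Fin (n+1) → List (Fin (n+1)) → OS n
  | _, [] => 1
  | r, x :: l => eOS n r x * pathM n x l

lemma comm_path (i j r : Fin (n+1)) (l : List (Fin (n+1))) :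
    pathM n r l * eOS n i j = eOS n i j * pathM n r l ∨
    pathM n r l * eOS n i j = -(eOS n i j * pathM n r l) := by
  induction l generalizing r with
  | nil => left; simp [pathM]
  | cons x l ih =>
    simp only [pathM]
    rcases ih x with h | h
    · right
      rw [mul_assoc, h, ← mul_assoc, eOS_anti r x i j]; simp [mul_assoc]
    · left
      rw [mul_assoc, h, mul_neg, ← mul_assoc, eOS_anti r x i j]; simp [mul_assoc]

lemma path_mul (l : List (Fin (n+1))) (r v x : Fin (n+1)) (hv : v ∈ r :: l) :
    pathM n r l * eOS n v x ∈
      Submodule.span ℚ {y | ∃ l', l'.Perm (x :: l) ∧ y = pathM n r l'} := by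
  induction l generalizing r v with
  | nil =>
    simp at hv
    subst hv
    exact Submodule.subset_span ⟨[x], List.Perm.refl _, by simp [pathM]⟩
  | cons y l ih =>
    have key : ∀ w ∈ y :: l, eOS n r y * (pathM n y l * eOS n w x) ∈
        Submodule.span ℚ {z | ∃ l', l'.Perm (x :: y :: l) ∧ z = pathM n r l'} := by
      intro w hw
      have h := ih y w hw
      generalize pathM n y l * eOS n w x = z at h
      induction h using Submodule.span_induction with
      | mem z hz =>
        obtain ⟨l', hl', rfl⟩ := hz
        exact Submodule.subset_span ⟨y :: l', (hl'.cons y).trans (List.Perm.swap _ _ _), rfl⟩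
      | zero => simp
      | add a b _ _ ha hb => rw [mul_add]; exact add_mem ha hb
      | smul c a _ ha => rw [mul_smul_comm]; exact Submodule.smul_mem _ _ ha
    by_cases hvl : v ∈ y :: l
    · simp only [pathM, mul_assoc]
      exact key v hvl
    · have hvr : v = r := by
        rcases List.mem_cons.mp hv with h | h
        · exact h
        · exact absurd h hvl
      subst hvr
      have e1 : eOS n v y * eOS n v x = eOS n v y * eOS n y x - eOS n v x * eOS n x y := by
        have h1 := eOS_rel (n := n) v y x
        rw [eOS_symm x y, h1]; abel
      have h2 : eOS n v x * (eOS n x y * pathM n y l) ∈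
          Submodule.span ℚ {z | ∃ l', l'.Perm (x :: y :: l) ∧ z = pathM n v l'} :=
        Submodule.subset_span ⟨x :: y :: l, List.Perm.refl _, rfl⟩
      have h3 : eOS n v y * (eOS n y x * pathM n y l) ∈
          Submodule.span ℚ {z | ∃ l', l'.Perm (x :: y :: l) ∧ z = pathM n v l'} := by
        have := key y (by simp)
        rcases comm_path y x y l with h | h
        · rwa [h] at this
        · rw [h, mul_neg] at this
          exact neg_mem_iff.mp this
      have h4 : eOS n v y * (eOS n v x * pathM n y l) ∈
          Submodule.span ℚ {z | ∃ l', l'.Perm (x :: y :: l) ∧ z = pathM n v l'} := by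
        rw [← mul_assoc, e1, sub_mul, mul_assoc, mul_assoc]
        exact sub_mem h3 h2
      simp only [pathM, mul_assoc]
      rcases comm_path v x y l with h | h
      · rw [h]; exact h4
      · rw [h, mul_neg]; exact neg_mem h4

lemma VS_pow_top (r : Fin (n+1)) (T : Finset (Fin (n+1))) (hr : r ∉ T) :
    VS n (insert r T) ^ T.card ≤
      Submodule.span ℚ {y | ∃ l : List (Fin (n+1)), l.Nodup ∧ (∀ x, x ∈ l ↔ x ∈ T) ∧
        y = pathM n r l} := by
  induction T using Finset.induction_on with
  | empty =>
    simp only [Finset.card_empty, pow_zero]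
    rw [Submodule.one_eq_span, Submodule.span_le]
    rintro _ rfl
    exact Submodule.subset_span ⟨[], by simp, by simp, by simp [pathM]⟩
  | insert x T hx ih =>
    have hr' : r ∉ T := fun h => hr (Finset.mem_insert_of_mem h)
    rw [Finset.card_insert_of_notMem hx, Finset.insert_comm]
    refine (VS_insert_pow _ x _).trans ?_
    rw [VS_pow_eq_bot r T hr' _ (Nat.lt_succ_self _), bot_sup_eq]
    refine (mul_le_mul' (ih hr') le_rfl).trans ?_
    rw [VX, Submodule.span_mul_span]
    apply Submodule.span_le.mpr
    rintro _ ⟨_, ⟨l, hl, hlT, rfl⟩, _, ⟨a, ha, rfl⟩, rfl⟩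
    have hmem : a ∈ r :: l := by
      rw [List.mem_cons, hlT]; exact Finset.mem_insert.mp ha
    refine Submodule.span_mono ?_ (path_mul l r a x hmem)
    rintro _ ⟨l', hl', rfl⟩
    refine ⟨l', ?_, ?_, rfl⟩
    · rw [hl'.nodup_iff, List.nodup_cons]
      exact ⟨by rwa [hlT], hl⟩
    · intro y
      rw [hl'.mem_iff, List.mem_cons, hlT, Finset.mem_insert]

lemma OSdeg_le (k : ℕ) : OSdeg n k ≤ VS n Finset.univ ^ k := by
  unfold OSdeg
  have := Submodule.map_pow (LinearMap.range (ExteriorAlgebra.ι ℚ :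
    (OSidx n →₀ ℚ) →ₗ[ℚ] OSamb n)) (RingQuot.mkAlgHom ℚ (OSRel n)) k
  rw [this]
  refine pow_le_pow_left' ?_ k
  rintro _ ⟨_, ⟨v, rfl⟩, rfl⟩
  induction v using Finsupp.induction_linear with
  | zero => simp
  | add v w hv hw => rw [map_add, map_add]; exact add_mem hv hw
  | single s c =>
    obtain ⟨⟨i, j⟩, hs⟩ := s
    have hij : i ≠ j := fun h => hs (by subst h; simp [Sym2.IsDiag])
    have h1 : Finsupp.single (⟨Quot.mk _ (i, j), hs⟩ : OSidx n) c =
      c • Finsupp.single (⟨s(i, j), hs⟩ : OSidx n) (1 : ℚ) := by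
        rw [Finsupp.smul_single]; simp
    rw [h1, map_smul, map_smul]
    apply Submodule.smul_mem
    have := eOS_mem_VS (n := n) (Finset.mem_univ i) (Finset.mem_univ j)
    simpa [eOS, hij, eAmb] using this

lemma OSperm_e (σ : Equiv.Perm (Fin (n+1))) (i j : Fin (n+1)) :
    OSperm n σ (eOS n i j) = eOS n (σ i) (σ j) := by
  by_cases h : i = j
  · subst h; simp [eOS_self]
  · have h' : ¬ σ i = σ j := fun hh => h (σ.injective hh)
    simp only [eOS, h, h', dite_false, OSperm, RingQuot.liftAlgHom_mkAlgHom_apply,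
      AlgHom.comp_apply, OSpermAmb_e]

lemma OSperm_path (σ : Equiv.Perm (Fin (n+1))) (r : Fin (n+1)) (l : List (Fin (n+1))) :
    OSperm n σ (pathM n r l) = pathM n (σ r) (l.map σ) := by
  induction l generalizing r with
  | nil => simp [pathM]
  | cons x l ih => simp [pathM, OSperm_e, ih]

lemma exists_perm_list {α : Type*} [DecidableEq α] (l l' : List α) (h : l.Nodup)
    (h' : l'.Nodup) (hl : ∀ x, x ∈ l) (hl' : ∀ x, x ∈ l') :
    ∃ σ : Equiv.Perm α, l.map σ = l' := by
  have hp : l.Perm l' := (List.perm_ext_iff_of_nodup h h').mpr (fun x => by simp [hl, hl'])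
  have hlen := hp.length_eq
  let E := h.getEquivOfForallMemList l hl
  let E' := h'.getEquivOfForallMemList l' hl'
  refine ⟨E.symm.trans ((finCongr hlen).trans E'), ?_⟩
  apply List.ext_getElem
  · simpa using hlen
  · intro i h1 h2
    simp only [List.length_map] at h1
    have : E.symm l[i] = ⟨i, h1⟩ := by
      rw [Equiv.symm_apply_eq]; rfl
    simp [this, E']

lemma OSinvDeg_top : Module.finrank ℚ (OSinvDeg n n) ≤ 1 := by
  classical
  let r := Fin.last n
  let T : Finset (Fin (n+1)) := Finset.univ.erase r
  have hr : r ∉ T := by simp [T]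
  have hT : T.card = n := by simp [T]
  have hins : insert r T = Finset.univ := by simp [T]
  let l0 := T.toList
  let G : Finset (Equiv.Perm (Fin (n+1))) := Finset.univ.filter (fun σ => σ r = r)
  have hG : (1 : Equiv.Perm (Fin (n+1))) ∈ G := by simp [G]
  let A : OS n →ₗ[ℚ] OS n := ∑ σ ∈ G, (OSperm n σ).toLinearMap
  have hA : ∀ x, A x = ∑ σ ∈ G, OSperm n σ x := by
    intro x; simp [A, LinearMap.sum_apply]
  have hle : OSinvDeg n n ≤ Submodule.span ℚ {A (pathM n r l0)} := by
    rintro x ⟨hx1, hx2⟩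
    have h1 : A x = (G.card : ℚ) • x := by
      rw [hA, Finset.sum_congr rfl (fun σ hσ => hx1 σ (Finset.mem_filter.mp hσ).2)]
      rw [Finset.sum_const, Nat.cast_smul_eq_nsmul]
    have hc : (G.card : ℚ) ≠ 0 := by
      exact_mod_cast (Finset.card_pos.mpr ⟨1, hG⟩).ne'
    have h2 : x = (G.card : ℚ)⁻¹ • A x := by
      rw [h1, smul_smul, inv_mul_cancel₀ hc, one_smul]
    rw [h2]
    apply Submodule.smul_mem
    have h3 := OSdeg_le n hx2
    rw [← hins] at h3
    have h3' : x ∈ VS n (insert r T) ^ T.card := by convert h3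
    have h4 := VS_pow_top r T hr h3'
    clear h1 h2 h3 h3' hx1 hx2
    induction h4 using Submodule.span_induction with
    | mem z hz =>
      obtain ⟨l, hl, hlT, rfl⟩ := hz
      obtain ⟨τ, hτ⟩ := exists_perm_list (r :: l0) (r :: l)
        (by simp [l0, T, T.nodup_toList]) (by simp [hl, hlT, T])
        (by intro x; simp [l0, T, em]) (by intro x; simp [hlT, T, em])
      simp only [List.map_cons, List.cons.injEq] at hτ
      have : A (pathM n r l) = A (pathM n r l0) := by
        rw [hA, hA]
        symm
        refine Finset.sum_bij (fun σ _ => σ * τ⁻¹) ?_ ?_ ?_ ?_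
        · intro σ hσ
          simp only [G, Finset.mem_filter, Finset.mem_univ, true_and] at hσ ⊢
          have : τ.symm r = r := by rw [Equiv.symm_apply_eq]; exact hτ.1.symm
          simp [this, hσ]
        · intro σ _ σ' _ h
          exact mul_right_cancel h
        · intro σ hσ
          refine ⟨σ * τ, ?_, by simp⟩
          simp only [G, Finset.mem_filter, Finset.mem_univ, true_and] at hσ ⊢
          simp [hσ, hτ.1]
        · intro σ hσ
          rw [OSperm_path, OSperm_path, ← hτ.2]
          have : τ.symm r = r := by rw [Equiv.symm_apply_eq]; exact hτ.1.symm
          simp [this, Function.comp_assoc]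
      rw [this]
      exact Submodule.mem_span_singleton_self _
    | zero => simp
    | add a b _ _ ha hb => rw [map_add]; exact add_mem ha hb
    | smul c a _ ha => rw [map_smul]; exact Submodule.smul_mem _ _ ha
  exact (Submodule.finrank_mono hle).trans ((finrank_span_le_card _).trans (by simp))

lemma OSinvDeg_big (k : ℕ) (hk : n < k) : Module.finrank ℚ (OSinvDeg n k) = 0 := by
  have h : OSinvDeg n k = ⊥ := by
    rw [eq_bot_iff]
    refine inf_le_right.trans ((OSdeg_le k).trans ?_)
    have := VS_pow_eq_bot (n := n) (Fin.last n) (Finset.univ.erase (Fin.last n)) (by simp) k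
      (by simpa using hk)
    rw [Finset.insert_erase (Finset.mem_univ _)] at this
    rw [this]
  rw [h]; simp

end Deg
section Main

variable {n : ℕ}

/-- `m` restricted to a vertex subset. -/
def mS (n : ℕ) (S : Finset (Fin n)) : OS n := ∑ i ∈ S, eOS n i.castSucc (Fin.last n)

/-- `c` restricted to a vertex subset. -/
def cS (n : ℕ) (S : Finset (Fin n)) : OS n :=
  ∑ i ∈ S, ∑ j ∈ S, eOS n i.castSucc j.castSucc * eOS n i.castSucc (Fin.last n)

/-- `2a` restricted to a vertex subset. -/
def aS (n : ℕ) (S : Finset (Fin n)) : OS n :=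
  ∑ i ∈ S, ∑ j ∈ S, eOS n i.castSucc j.castSucc

lemma sum_lt_symm {M : Type*} [AddCommMonoid M] (h : Fin n → Fin n → M) (h0 : ∀ i, h i i = 0) :
    ∑ p ∈ Finset.univ.filter (fun p : Fin n × Fin n => p.1 < p.2), (h p.1 p.2 + h p.2 p.1)
      = ∑ i, ∑ j, h i j := by
  rw [Finset.sum_filter, Fintype.sum_prod_type]
  have e1 : ∀ i j : Fin n, (if i < j then h i j + h j i else 0) =
      (if i < j then h i j else 0) + (if i < j then h j i else 0) := by
    intro i j; split_ifs <;> simp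
  simp only [e1, Finset.sum_add_distrib]
  rw [Finset.sum_comm (f := fun i j => if i < j then h j i else 0)]
  simp only [← Finset.sum_add_distrib]
  refine Finset.sum_congr rfl fun i _ => Finset.sum_congr rfl fun j _ => ?_
  rcases lt_trichotomy i j with hij | hij | hij
  · simp [hij, hij.not_gt]
  · subst hij; simp [h0]
  · simp [hij, hij.not_gt]

lemma mS_univ : mS n Finset.univ = mOS n := rfl

lemma cS_univ : cS n Finset.univ = cOS n := by
  unfold cS cOS
  rw [← sum_lt_symm (fun i j : Fin n =>
    eOS n i.castSucc j.castSucc * eOS n i.castSucc (Fin.last n)) (by simp [eOS_self])]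
  refine Finset.sum_congr rfl fun p _ => ?_
  simp only [eOS_symm p.2.castSucc p.1.castSucc]

lemma aS_univ : aS n Finset.univ = aOS n + aOS n := by
  unfold aS aOS
  rw [← sum_lt_symm (fun i j : Fin n => eOS n i.castSucc j.castSucc) (by simp [eOS_self]),
    ← Finset.sum_add_distrib]
  refine Finset.sum_congr rfl fun p _ => ?_
  simp only [eOS_symm p.2.castSucc p.1.castSucc]

/-- Vertex set of the root block. -/
def blk (n : ℕ) (S : Finset (Fin n)) : Finset (Fin (n+1)) :=
  insert (Fin.last n) (S.map Fin.castSuccEmb)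

lemma cast_mem_blk {S : Finset (Fin n)} {i : Fin n} (hi : i ∈ S) : i.castSucc ∈ blk n S := by
  simp [blk, hi]

lemma last_mem_blk (S : Finset (Fin n)) : Fin.last n ∈ blk n S := by simp [blk]

lemma blk_pow (S : Finset (Fin n)) (k : ℕ) (hk : S.card < k) : VS n (blk n S) ^ k = ⊥ := by
  apply VS_pow_eq_bot
  · simp [Fin.castSucc_ne_last]
  · simpa using hk

lemma mS_mem (S : Finset (Fin n)) : mS n S ∈ VS n (blk n S) :=
  Submodule.sum_mem _ fun _ hi => eOS_mem_VS (cast_mem_blk hi) (last_mem_blk S)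

lemma aS_mem (S : Finset (Fin n)) : aS n S ∈ VS n (blk n S) :=
  Submodule.sum_mem _ fun _ hi => Submodule.sum_mem _ fun _ hj =>
    eOS_mem_VS (cast_mem_blk hi) (cast_mem_blk hj)

lemma cS_mem (S : Finset (Fin n)) : cS n S ∈ VS n (blk n S) ^ 2 := by
  rw [pow_two]
  exact Submodule.sum_mem _ fun _ hi => Submodule.sum_mem _ fun _ hj =>
    Submodule.mul_mem_mul (eOS_mem_VS (cast_mem_blk hi) (cast_mem_blk hj))
      (eOS_mem_VS (cast_mem_blk hi) (last_mem_blk S))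

lemma cS_pow_mem (S : Finset (Fin n)) (d : ℕ) : cS n S ^ d ∈ VS n (blk n S) ^ (2 * d) := by
  rw [pow_mul]
  exact Submodule.pow_mem_pow _ (cS_mem S) d

lemma mc_mem (S : Finset (Fin n)) (d : ℕ) :
    mS n S * cS n S ^ d ∈ VS n (blk n S) ^ (2 * d + 1) := by
  rw [pow_succ']
  exact Submodule.mul_mem_mul (mS_mem S) (cS_pow_mem S d)

lemma amc_mem (S : Finset (Fin n)) (d : ℕ) :
    aS n S * (mS n S * cS n S ^ d) ∈ VS n (blk n S) ^ (2 * d + 2) := by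
  rw [pow_succ']
  exact Submodule.mul_mem_mul (aS_mem S) (mc_mem S d)

/-- Polynomial-type functions of a subset. -/
def QP (n k : ℕ) : Submodule ℚ (Finset (Fin n) → OS n) :=
  Submodule.span ℚ {F | ∃ T : Finset (Fin n), T.card ≤ k ∧ ∃ x : OS n,
    F = fun S => if T ⊆ S then x else 0}

lemma QP_gen {k : ℕ} (T : Finset (Fin n)) (hT : T.card ≤ k) (x : OS n) :
    (fun S => if T ⊆ S then x else 0) ∈ QP n k := Submodule.subset_span ⟨T, hT, x, rfl⟩

lemma QP_mul (k l : ℕ) : QP n k * QP n l ≤ QP n (k + l) := by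
  conv_lhs => rw [QP, QP, Submodule.span_mul_span]
  apply Submodule.span_le.mpr
  rintro _ ⟨_, ⟨T, hT, x, rfl⟩, _, ⟨U, hU, y, rfl⟩, rfl⟩
  refine Submodule.subset_span ⟨T ∪ U, (Finset.card_union_le _ _).trans (by omega), x * y, ?_⟩
  funext S
  simp only [Pi.mul_apply, Finset.union_subset_iff]
  by_cases h1 : T ⊆ S <;> by_cases h2 : U ⊆ S <;> simp [h1, h2]

lemma QP_vanish {k : ℕ} (F : Finset (Fin n) → OS n) (hF : F ∈ QP n k)
    (h0 : ∀ S : Finset (Fin n), S.card ≤ k → F S = 0) (S : Finset (Fin n)) : F S = 0 := by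
  have hG : ∃ G : Finset (Fin n) → OS n, (∀ T, k < T.card → G T = 0) ∧
      ∀ S, F S = ∑ T ∈ S.powerset, G T := by
    clear h0
    induction hF using Submodule.span_induction with
    | mem F h =>
      obtain ⟨T, hT, x, rfl⟩ := h
      refine ⟨fun U => if U = T then x else 0, ?_, ?_⟩
      · intro U hU
        have : U ≠ T := by rintro rfl; omega
        simp [this]
      · intro S
        simp [Finset.sum_ite_eq']
    | zero => exact ⟨0, by simp, by simp⟩
    | add F F' _ _ h h' =>
      obtain ⟨G, h1, h2⟩ := h
      obtain ⟨G', h1', h2'⟩ := h'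
      refine ⟨G + G', ?_, ?_⟩
      · intro T hT; simp [h1 T hT, h1' T hT]
      · intro S; simp [h2, h2', Finset.sum_add_distrib]
    | smul c F _ h =>
      obtain ⟨G, h1, h2⟩ := h
      refine ⟨c • G, ?_, ?_⟩
      · intro T hT; simp [h1 T hT]
      · intro S; simp [h2, Finset.smul_sum]
  obtain ⟨G, h1, h2⟩ := hG
  have hz : ∀ T, G T = 0 := by
    intro T
    induction T using Finset.strongInduction with
    | H T ih =>
      by_cases hT : k < T.card
      · exact h1 T hT
      · have := h0 T (by omega)
        rw [h2, Finset.sum_eq_single T] at this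
        · exact this
        · intro U hU hne
          exact ih U ((Finset.mem_powerset.mp hU).ssubset_of_ne hne)
        · simp
  rw [h2]; simp [hz]

lemma mS_QP : mS n ∈ QP n 1 := by
  have : mS n = ∑ i : Fin n, fun S => if ({i} : Finset (Fin n)) ⊆ S then
      eOS n i.castSucc (Fin.last n) else 0 := by
    funext S
    simp [mS, Finset.sum_apply]
  rw [this]
  exact Submodule.sum_mem _ fun i _ => QP_gen _ (by simp) _

lemma cS_QP : cS n ∈ QP n 2 := by
  have : cS n = ∑ i : Fin n, ∑ j : Fin n, fun S => if ({i, j} : Finset (Fin n)) ⊆ S then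
      eOS n i.castSucc j.castSucc * eOS n i.castSucc (Fin.last n) else 0 := by
    funext S
    simp [cS, Finset.sum_apply, Finset.insert_subset_iff, ite_and, Finset.sum_ite_irrel]
  rw [this]
  exact Submodule.sum_mem _ fun i _ => Submodule.sum_mem _ fun j _ =>
    QP_gen _ Finset.card_le_two _

lemma mc_QP (d : ℕ) : (fun S => mS n S * cS n S ^ d) ∈ QP n (2 * d + 1) := by
  induction d with
  | zero => simpa using mS_QP
  | succ d ih =>
    have := QP_mul _ _ (Submodule.mul_mem_mul ih cS_QP)
    have e : 2 * (d + 1) + 1 = 2 * d + 1 + 2 := by ring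
    rw [e]
    convert this using 1
    funext S
    simp [pow_succ, mul_assoc]

lemma comm_c (S : Finset (Fin n)) (i j : Fin (n+1)) : Commute (cS n S) (eOS n i j) := by
  refine Commute.sum_left _ _ _ fun k _ => Commute.sum_left _ _ _ fun l _ => ?_
  unfold Commute SemiconjBy
  rw [mul_assoc, eOS_anti _ _ i j, mul_neg, ← mul_assoc, eOS_anti _ _ i j]
  simp [mul_assoc]

/-- Key localization step. -/
lemma u_zero (d : ℕ) (hd : 2 * d + 3 ≤ n) (x y : ℚ) (hx : x ≠ 0)
    (hrel : x • (aOS n * mOS n * cOS n ^ d) + y • cOS n ^ (d+1) = 0)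
    (R : Finset (Fin n)) (hR : R.card = 2 * d + 1) : mS n R * cS n R ^ d = 0 := by
  have hcard : 1 < (Rᶜ).card := by rw [Finset.card_compl, Fintype.card_fin]; omega
  obtain ⟨p, hp, q, hq, hpq⟩ := Finset.one_lt_card.mp hcard
  rw [Finset.mem_compl] at hp hq
  let b : Fin (n+1) → ℕ := Fin.lastCases 0
    (fun i => if i ∈ R then 0 else if i = p ∨ i = q then 1 else i.val + 2)
  have b0 : b (Fin.last n) = 0 := by simp [b]
  have b1 : ∀ i : Fin n, b i.castSucc = if i ∈ R then 0 else if i = p ∨ i = q then 1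
    else i.val + 2 := fun i => by simp [b]
  let b' : Fin (n+1) → ℕ := Fin.lastCases 0 (fun i => if i ∈ R then 0 else i.val + 2)
  have b0' : b' (Fin.last n) = 0 := by simp [b']
  have b1' : ∀ i : Fin n, b' i.castSucc = if i ∈ R then 0 else i.val + 2 :=
    fun i => by simp [b']
  obtain ⟨φ, hφ⟩ := exists_loc (n := n) b
  obtain ⟨φ', hφ'⟩ := exists_loc (n := n) b'
  have hbl : ∀ i : Fin n, b i.castSucc = b (Fin.last n) ↔ i ∈ R := by
    intro i; rw [b0, b1]; split_ifs <;> simp_all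
  have hm : φ (mOS n) = mS n R := by
    simp [← mS_univ, mS, hφ, hbl]
  have hc : φ (cOS n) = cS n R := by
    have e1 : ∀ i j : Fin n, φ (eOS n i.castSucc j.castSucc * eOS n i.castSucc (Fin.last n)) =
        if i ∈ R then (if j ∈ R then eOS n i.castSucc j.castSucc *
          eOS n i.castSucc (Fin.last n) else 0) else 0 := by
      intro i j
      rw [map_mul, hφ, hφ]
      simp only [hbl]
      by_cases hi : i ∈ R
      · have : b i.castSucc = b j.castSucc ↔ j ∈ R := by
          rw [← hbl j, (hbl i).mpr hi, eq_comm]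
        simp [hi, this]
      · simp [hi]
    rw [← cS_univ]
    simp only [cS, map_sum, e1]
    simp [Finset.sum_ite_irrel]
  have ha : φ (aS n Finset.univ) = aS n R + (eOS n p.castSucc q.castSucc
      + eOS n p.castSucc q.castSucc) := by
    have e1 : ∀ i j : Fin n, φ (eOS n i.castSucc j.castSucc) =
        (if i ∈ R then (if j ∈ R then eOS n i.castSucc j.castSucc else 0) else 0) +
        ((if i = p then (if j = q then eOS n i.castSucc j.castSucc else 0) else 0) +
        (if i = q then (if j = p then eOS n i.castSucc j.castSucc else 0) else 0)) := by
      intro i j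
      by_cases hij : i = j
      · subst hij
        simp [eOS_self]
      have hij' : i.val ≠ j.val := fun h => hij (Fin.ext h)
      rw [hφ, b1, b1]
      by_cases hi : i ∈ R
      · have hip : i ≠ p := by rintro rfl; exact hp hi
        have hiq : i ≠ q := by rintro rfl; exact hq hi
        by_cases hj : j ∈ R
        · simp [hi, hj, hip, hiq]
        · by_cases h : j = p ∨ j = q <;> simp [hi, hj, hip, hiq, h]
      · by_cases hj : j ∈ R
        · have hjp : j ≠ p := by rintro rfl; exact hp hj
          have hjq : j ≠ q := by rintro rfl; exact hq hj
          by_cases h : i = p ∨ i = q <;> simp [hi, hj, hjp, hjq, h]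
        · by_cases hip : i = p
          · subst hip
            by_cases hjq : j = q
            · subst hjq; simp [hi, hj, hpq]
            · have : j ≠ i := fun h => hij h.symm
              simp [hi, hj, hpq, hjq, this]
          · by_cases hiq : i = q
            · subst hiq
              by_cases hjp : j = p
              · subst hjp; simp [hi, hj, hip]
              · have : j ≠ i := fun h => hij h.symm
                simp [hi, hj, hip, hjp, this]
            · by_cases h : j = p ∨ j = q
              · simp [hi, hj, hip, hiq, h]
              · simp [hi, hj, hip, hiq, h, hij']
    simp only [aS, map_sum, e1, Finset.sum_add_distrib]
    simp [Finset.sum_ite_irrel, eOS_symm q.castSucc p.castSucc]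
  set u := mS n R * cS n R ^ d with hu
  set e := eOS n p.castSucc q.castSucc with he
  have hau : aS n R * u = 0 := by
    have := amc_mem R d
    rwa [blk_pow R _ (by omega), Submodule.mem_bot] at this
  have hcc : cS n R ^ (d+1) = 0 := by
    have := cS_pow_mem R (d+1)
    rwa [blk_pow R _ (by omega), Submodule.mem_bot] at this
  -- the relation forces `e * u = 0`
  have heu : e * u = 0 := by
    have h1 : x • (aS n Finset.univ * (mOS n * cOS n ^ d)) + (2 * y) • cOS n ^ (d+1) = 0 := by
      have : x • (aS n Finset.univ * (mOS n * cOS n ^ d)) + (2 * y) • cOS n ^ (d+1) =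
        (2 : ℚ) • (x • (aOS n * mOS n * cOS n ^ d) + y • cOS n ^ (d+1)) := by
        rw [aS_univ, add_mul, smul_add, smul_add, two_smul, mul_smul, mul_assoc]
      rw [this, hrel, smul_zero]
    have h2 := congrArg φ h1
    simp only [map_add, map_smul, map_mul, map_pow, ha, hm, hc, hcc, smul_zero, map_zero,
      add_zero, ← hu] at h2
    rw [add_mul, hau, zero_add, add_mul, ← two_smul ℚ (e * u)] at h2
    have h3 := (smul_eq_zero.mp h2).resolve_left hx
    exact (smul_eq_zero.mp h3).resolve_left (by norm_num)
  -- apply the derivation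
  obtain ⟨D, hD⟩ := exists_der (n := n)
  have hDm : ∃ t, D (mS n R) = !![mS n R, t; 0, - mS n R] := by
    have : D (mS n R) = ∑ i ∈ R, !![eOS n i.castSucc (Fin.last n), 1; 0,
        - eOS n i.castSucc (Fin.last n)] := by
      rw [mS, map_sum]
      exact Finset.sum_congr rfl fun i _ => hD _ _ (Fin.castSucc_ne_last i)
    refine ⟨∑ i ∈ R, 1, ?_⟩
    rw [this]
    ext a b; fin_cases a <;> fin_cases b <;> simp [mS, Matrix.sum_apply]
  have hDc : ∃ t, D (cS n R) = !![cS n R, t; 0, cS n R] := by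
    have : ∀ i j : Fin n, ∃ t, D (eOS n i.castSucc j.castSucc * eOS n i.castSucc (Fin.last n)) =
        !![eOS n i.castSucc j.castSucc * eOS n i.castSucc (Fin.last n), t; 0,
          eOS n i.castSucc j.castSucc * eOS n i.castSucc (Fin.last n)] := by
      intro i j
      by_cases hij : i = j
      · subst hij; refine ⟨0, ?_⟩; rw [eOS_self, zero_mul, map_zero]
        ext a b; fin_cases a <;> fin_cases b <;> simp
      · have hij' : i.castSucc ≠ j.castSucc := fun h => hij (Fin.castSucc_injective n h)
        rw [map_mul, hD _ _ hij', hD _ _ (Fin.castSucc_ne_last i), Matrix.mul_fin_two]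
        refine ⟨eOS n i.castSucc j.castSucc * 1 + 1 * -eOS n i.castSucc (Fin.last n), ?_⟩
        simp
    choose t ht using this
    refine ⟨∑ i ∈ R, ∑ j ∈ R, t i j, ?_⟩
    simp only [cS, map_sum, ht]
    ext a b; fin_cases a <;> fin_cases b <;> simp [Matrix.sum_apply]
  have hDck : ∀ k : ℕ, ∃ t, D (cS n R ^ k) = !![cS n R ^ k, t; 0, cS n R ^ k] := by
    intro k
    induction k with
    | zero => refine ⟨0, ?_⟩; simp [Matrix.one_fin_two]
    | succ k ih =>
      obtain ⟨t, ht⟩ := hDc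
      obtain ⟨s, hs⟩ := ih
      rw [pow_succ, map_mul, hs, ht, Matrix.mul_fin_two]
      exact ⟨cS n R ^ k * t + s * cS n R, by simp⟩
  obtain ⟨t1, ht1⟩ := hDm
  obtain ⟨t2, ht2⟩ := hDck d
  have hpq' : p.castSucc ≠ q.castSucc := fun h => hpq (Fin.castSucc_injective n h)
  have h5 := congrArg D heu
  rw [map_mul, hu, map_mul, ht1, ht2, hD _ _ hpq', Matrix.mul_fin_two, Matrix.mul_fin_two,
    map_zero] at h5
  have h6 := congrFun (congrFun h5 0) 1
  simp only [Matrix.of_apply, Matrix.cons_val_zero, Matrix.cons_val_one, Matrix.zero_apply,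
    zero_mul, zero_add, one_mul, neg_mul] at h6
  rw [← hu] at h6
  have h7 := congrArg φ' h6
  have hbl' : ∀ i : Fin n, b' i.castSucc = b' (Fin.last n) ↔ i ∈ R := by
    intro i; rw [b0', b1']; split_ifs <;> simp_all
  have hm' : φ' (mS n R) = mS n R := by
    rw [mS, map_sum]
    exact Finset.sum_congr rfl fun i hi => by rw [hφ', if_pos ((hbl' i).mpr hi)]
  have hc' : φ' (cS n R) = cS n R := by
    simp only [cS, map_sum, map_mul]
    refine Finset.sum_congr rfl fun i hi => Finset.sum_congr rfl fun j hj => ?_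
    rw [hφ', hφ', if_pos ((hbl' i).mpr hi),
      if_pos (((hbl' i).mpr hi).trans ((hbl' j).mpr hj).symm)]
  have he' : φ' e = 0 := by
    have : ¬ p.val = q.val := fun h => hpq (Fin.ext h)
    rw [he, hφ', b1', b1']; simp [hp, hq, this]
  have hu' : φ' u = u := by rw [hu, map_mul, map_pow, hm', hc']
  rw [he] at he'
  rw [map_add, map_mul, map_neg, he', hu', zero_mul, zero_add, map_zero] at h7
  exact neg_eq_zero.mp h7

lemma Dc (D : OS n →ₐ[ℚ] Matrix (Fin 2) (Fin 2) (OS n))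
    (hD : ∀ i j, i ≠ j → D (eOS n i j) = !![eOS n i j, 1; 0, - eOS n i j]) :
    D (cOS n) = !![cOS n, aS n Finset.univ - ((n : ℚ) - 1) • mOS n; 0, cOS n] := by
  have ht : ∀ i j : Fin n, D (eOS n i.castSucc j.castSucc * eOS n i.castSucc (Fin.last n)) =
        !![eOS n i.castSucc j.castSucc * eOS n i.castSucc (Fin.last n),
          eOS n i.castSucc j.castSucc - (eOS n i.castSucc (Fin.last n) -
            if i = j then eOS n i.castSucc (Fin.last n) else 0); 0,
          eOS n i.castSucc j.castSucc * eOS n i.castSucc (Fin.last n)] := by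
    intro i j
    by_cases hij : i = j
    · subst hij; rw [eOS_self, zero_mul, map_zero]
      ext a b; fin_cases a <;> fin_cases b <;> simp
    · have hij' : i.castSucc ≠ j.castSucc := fun h => hij (Fin.castSucc_injective n h)
      rw [map_mul, hD _ _ hij', hD _ _ (Fin.castSucc_ne_last i), Matrix.mul_fin_two]
      simp [hij, sub_eq_add_neg]
  have hs : ∑ i : Fin n, ∑ j : Fin n, (eOS n i.castSucc j.castSucc -
      (eOS n i.castSucc (Fin.last n) - if i = j then eOS n i.castSucc (Fin.last n) else 0)) =
      aS n Finset.univ - ((n : ℚ) - 1) • mOS n := by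
    simp only [Finset.sum_sub_distrib, aS, mOS, sub_smul, one_smul]
    simp [Finset.smul_sum, Nat.cast_smul_eq_nsmul]
  rw [← cS_univ, ← hs]
  simp only [cS, map_sum, ht]
  ext a b; fin_cases a <;> fin_cases b <;> simp [Matrix.sum_apply]

lemma Dck (d : ℕ) : ∃ D : OS n →ₐ[ℚ] Matrix (Fin 2) (Fin 2) (OS n),
    D (cOS n ^ (d+1)) = !![cOS n ^ (d+1),
      ((d : ℚ) + 1) • ((aS n Finset.univ - ((n : ℚ) - 1) • mOS n) * cOS n ^ d);
      0, cOS n ^ (d+1)] := by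
  obtain ⟨D, hD⟩ := exists_der (n := n)
  refine ⟨D, ?_⟩
  have h := Dc D hD
  have hcomm : Commute (cOS n) (aS n Finset.univ - ((n : ℚ) - 1) • mOS n) := by
    rw [← cS_univ]
    refine Commute.sub_right ?_ (Commute.smul_right ?_ _)
    · exact Commute.sum_right _ _ _ fun i _ => Commute.sum_right _ _ _ fun j _ => comm_c _ _ _
    · exact Commute.sum_right _ _ _ fun i _ => comm_c _ _ _
  set s := aS n Finset.univ - ((n : ℚ) - 1) • mOS n
  induction d with
  | zero => simp [h]
  | succ d ih =>
    rw [pow_succ, map_mul, ih, h, Matrix.mul_fin_two]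
    have e1 : cOS n ^ (d+1) * s = s * cOS n ^ (d+1) := (hcomm.pow_left (d+1)).eq
    have e2 : s * cOS n ^ d * cOS n = s * cOS n ^ (d+1) := by rw [mul_assoc, ← pow_succ]
    have e3 : cOS n ^ (d+1) * s + ((d : ℚ) + 1) • (s * cOS n ^ d) * cOS n =
        (((d+1 : ℕ) : ℚ) + 1) • (s * cOS n ^ (d+1)) := by
      rw [smul_mul_assoc, e2, e1]; push_cast; module
    rw [e3]
    simp

end Main

/-- Let `n ≥ 2` with `n ≠ 3` and let `d ≥ 0`. If `{a·cᵈ, m·cᵈ}` is linearly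
independent and `dim (OS_n^{S_n})_{2d+2} ≥ 2`, then `{a·m·cᵈ, c^{d+1}}` is linearly
independent. -/
theorem consecutive_degree_LI_even (n : ℕ) (hn : 2 ≤ n) (hn3 : n ≠ 3) (d : ℕ)
    (h1 : LinearIndependent ℚ ![aOS n * cOS n ^ d, mOS n * cOS n ^ d])
    (h2 : 2 ≤ Module.finrank ℚ (OSinvDeg n (2*d+2))) :
    LinearIndependent ℚ ![aOS n * mOS n * cOS n ^ d, cOS n ^ (d+1)] := by
  have hnd : 2 * d + 3 ≤ n := by
    by_contra hcon
    rcases Nat.lt_or_ge n (2*d+2) with h | h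
    · rw [OSinvDeg_big _ h] at h2; omega
    · have hnn : n = 2*d+2 := by omega
      have := OSinvDeg_top (n := n)
      rw [← hnn] at h2
      omega
  have hmc : mOS n * cOS n ^ d ≠ 0 := by
    simpa using h1.ne_zero 1
  rw [LinearIndependent.pair_iff] at h1 ⊢
  intro x y hxy
  have hx : x = 0 := by
    by_contra hx
    apply hmc
    have := QP_vanish _ (mc_QP (n := n) d) (fun S hS => ?_) Finset.univ
    · simpa [mS_univ, cS_univ] using this
    · rcases Nat.lt_or_ge S.card (2*d+1) with h | h
      · have := mc_mem S d
        rwa [blk_pow S _ h, Submodule.mem_bot] at this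
      · exact u_zero d hnd x y hx hxy S (by omega)
  refine ⟨hx, ?_⟩
  by_contra hy
  rw [hx, zero_smul, zero_add] at hxy
  have hc0 := (smul_eq_zero.mp hxy).resolve_left hy
  obtain ⟨D, hD⟩ := Dck (n := n) d
  rw [hc0, map_zero] at hD
  have h3 := congrFun (congrFun hD 0) 1
  simp only [Matrix.of_apply, Matrix.cons_val_zero, Matrix.cons_val_one,
    Matrix.zero_apply] at h3
  have hd0 : ((d : ℚ) + 1) ≠ 0 := by positivity
  have h4 := (smul_eq_zero.mp h3.symm).resolve_left hd0
  have h5 := h1 2 (-((n : ℚ) - 1)) (by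
    rw [← h4, aS_univ, sub_mul, add_mul, two_smul, smul_mul_assoc]
    module)
  norm_num at h5

end
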